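/- Let H be a Hopf algebra over K. On the vector space H ⊗ H, the multiplication defined by (h¹ # h²)(h³ # h⁴) = ∑ h¹ h²₍₁₎ h³ S(h²₍₂₎) # h²₍₃₎ h⁴ is associative, and the map P_R(h # h') = ε(h') (h # 1_H) is an idempotent Rota-Baxter operator of weight -1 on this algebra. -/

import Mathlib

/-!
STATEMENT 16: For a Hopf algebra `H`, the smash product multiplication on `H ⊗ H`
arising from the adjoint action,
`(h¹ # h²)(h³ # h⁴) = ∑ h¹ h²₍₁₎ h³ S(h²₍₂₎) # h²₍₃₎ h⁴`,
is associative, and `P_R(h # h') = ε(h')(h # 1)` is an idempotent Rota-Baxter operator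
of weight `-1` on this algebra.
-/

open TensorProduct Coalgebra HopfAlgebra LinearMap

/-- The adjoint action of a Hopf algebra on itself, `x · h = ∑ x₍₁₎ h S(x₍₂₎)`,
as a linear map `H ⊗ H →ₗ H`. -/
noncomputable def adjointAction (K : Type*) [Field K]
    (H : Type*) [Ring H] [HopfAlgebra K H] :
    H ⊗[K] H →ₗ[K] H :=
  (LinearMap.mul' K H) ∘ₗ
  (LinearMap.lTensor H (LinearMap.mul' K H)) ∘ₗ
  (LinearMap.lTensor H (LinearMap.lTensor H (antipode (R := K) (A := H)))) ∘ₗ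
  (LinearMap.lTensor H (TensorProduct.comm K H H).toLinearMap) ∘ₗ
  (TensorProduct.assoc K H H H).toLinearMap ∘ₗ
  (LinearMap.rTensor H (Coalgebra.comul (R := K) (A := H)))

/-- The smash product multiplication on `H ⊗ H` arising from the adjoint action:
`(h¹ # h²)(h³ # h⁴) = ∑ h¹ h²₍₁₎ h³ S(h²₍₂₎) # h²₍₃₎ h⁴`. -/
noncomputable def adSmashMul (K : Type*) [Field K]
    (H : Type*) [Ring H] [HopfAlgebra K H] :
    (H ⊗[K] H) ⊗[K] (H ⊗[K] H) →ₗ[K] H ⊗[K] H :=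
  (LinearMap.rTensor H (LinearMap.mul' K H)) ∘ₗ
  (TensorProduct.assoc K H H H).symm.toLinearMap ∘ₗ
  (LinearMap.lTensor H (TensorProduct.map (adjointAction K H) (LinearMap.mul' K H))) ∘ₗ
  (LinearMap.lTensor H (TensorProduct.tensorTensorTensorComm K H H H H).toLinearMap) ∘ₗ
  (TensorProduct.assoc K H (H ⊗[K] H) (H ⊗[K] H)).toLinearMap ∘ₗ
  (LinearMap.rTensor (H ⊗[K] H) (LinearMap.lTensor H (Coalgebra.comul (R := K) (A := H))))

/-!
Let `R_c` be right multiplication by `c`. In the convolution algebra `Hom(H, H)`, where `S` is the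
inverse of `id`, the adjoint action on `c` is the product `R_c * S`. Convolution with the first leg
makes `H ⊗ H` a right `Hom(H, H)`-module, on which `id` acts by the Galois map
`β(a ⊗ b) = ∑ a b₍₁₎ ⊗ b₍₂₎`; hence `β` is bijective, and `R_c * S * id = R_c` says that `β` carries
the smash product to the ordinary tensor product algebra. This gives associativity. The Rota-Baxter
identity follows from `P(x P(y)) = P(x y)` and `P(P(x) y) = P(x) P(y)`.
-/

open WithConv

lemma rTensor_mulRight_apply {R A B : Type*} [CommSemiring R] [Semiring A] [Algebra R A]
    [Semiring B] [Algebra R B] (c : A) (t : A ⊗[R] B) :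
    rTensor B (mulRight R c) t = t * c ⊗ₜ 1 := by
  induction t with
  | zero => simp
  | add t u ht hu => simp only [add_mul, map_add, ht, hu]
  | tmul a b => simp

section Convolution

variable {R A C : Type*} [CommSemiring R] [Semiring A] [Algebra R A] [AddCommMonoid C] [Module R C]
  [Coalgebra R C]

/-- The left `A`-linear endomorphism `a ⊗ c ↦ ∑ a f(c₍₁₎) ⊗ c₍₂₎` of `A ⊗ C` attached to a linear
map `f : C → A`. For `A = C` a Hopf algebra and `f = id` it is the Galois map of `A`. -/
noncomputable def convEnd (f : C →ₗ[R] A) : A ⊗[R] C →ₗ[A] A ⊗[R] C :=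
  AlgebraTensorModule.lift (toSpanSingleton A (C →ₗ[R] A ⊗[R] C) (rTensor C f ∘ₗ comul))

@[simp]
lemma convEnd_tmul (f : C →ₗ[R] A) (a : A) (c : C) :
    convEnd f (a ⊗ₜ c) = a • rTensor C f (comul c) := by
  simp [convEnd]

lemma convEnd_one : convEnd (1 : WithConv (C →ₗ[R] A)).ofConv = .id := by
  ext c
  simp [LinearMap.convOne_def, rTensor_comp_apply]

lemma convEnd_rTensor (f g : C →ₗ[R] A) (t : C ⊗[R] C) :
    convEnd g (rTensor C f t) = rTensor C (mul' R A ∘ₗ TensorProduct.map f g)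
      ((TensorProduct.assoc R C C C).symm (lTensor C comul t)) := by
  induction t with
  | zero => simp
  | add t u ht hu => simp only [map_add, ht, hu]
  | tmul c d => simp [← (ℛ R d).eq, tmul_sum, Finset.smul_sum, smul_tmul']

lemma convEnd_mul (f g : WithConv (C →ₗ[R] A)) :
    convEnd (f * g).ofConv = convEnd g.ofConv ∘ₗ convEnd f.ofConv := by
  ext c
  suffices rTensor C (f * g).ofConv (comul c) = convEnd g.ofConv (rTensor C f.ofConv (comul c)) by
    simpa
  rw [convEnd_rTensor, coassoc_symm_apply, ← rTensor_comp_apply]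
  rfl

lemma convEnd_comp_convEnd_of_mul_eq_one {f g : WithConv (C →ₗ[R] A)} (h : f * g = 1) :
    convEnd g.ofConv ∘ₗ convEnd f.ofConv = .id := by
  rw [← convEnd_mul, h, convEnd_one]

end Convolution

section CounitProj

variable (R A H : Type*) [CommSemiring R] [Semiring A] [Algebra R A] [Semiring H] [Bialgebra R H]

/-- The map `P_R : a # h ↦ ε(h) (a # 1)`, for any algebra `A` in the first factor,
as a left `A`-linear map. -/
noncomputable def counitProj : A ⊗[R] H →ₗ[A] A ⊗[R] H :=
  AlgebraTensorModule.lTensor A A (Algebra.linearMap R H ∘ₗ counit)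

variable {R A H}

lemma counitProj_tmul (a : A) (h : H) :
    counitProj R A H (a ⊗ₜ h) = counit (R := R) h • a ⊗ₜ 1 := by
  simp [counitProj, Algebra.algebraMap_eq_smul_one]

lemma counitProj_counitProj (t : A ⊗[R] H) :
    counitProj R A H (counitProj R A H t) = counitProj R A H t := by
  induction t with
  | zero => simp
  | add t u ht hu => simp only [map_add, ht, hu]
  | tmul a h => simp [counitProj]

lemma counitProj_mul_one_tmul (t : A ⊗[R] H) (h : H) :
    counitProj R A H (t * 1 ⊗ₜ h) = counit (R := R) h • counitProj R A H t := by
  induction t with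
  | zero => simp
  | add t u ht hu => simp only [add_mul, map_add, smul_add, ht, hu]
  | tmul a k => simp [counitProj_tmul, mul_comm, mul_smul]

lemma counitProj_rTensor (f : H →ₗ[R] A) (t : H ⊗[R] H) :
    counitProj R A H (rTensor H f t) = f (TensorProduct.rid R H (lTensor H counit t)) ⊗ₜ 1 := by
  induction t with
  | zero => simp
  | add t u ht hu => simp only [map_add, add_tmul, ht, hu]
  | tmul h k => simp [counitProj_tmul, smul_tmul']

lemma counitProj_convEnd_tmul (f : H →ₗ[R] A) (a : A) (h : H) :
    counitProj R A H (convEnd f (a ⊗ₜ h)) = (a * f h) ⊗ₜ 1 := by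
  simp [counitProj_rTensor, smul_tmul']

end CounitProj

section Galois

variable {R H : Type*} [CommSemiring R] [Semiring H] [HopfAlgebra R H]

variable (R H) in
/-- The Galois map `a ⊗ b ↦ ∑ a b₍₁₎ ⊗ b₍₂₎` of a Hopf algebra, with its inverse
`a ⊗ b ↦ ∑ a S(b₍₁₎) ⊗ b₍₂₎`. -/
noncomputable def galoisEquiv : H ⊗[R] H ≃ₗ[H] H ⊗[R] H :=
  LinearEquiv.ofLinearMap (convEnd .id) (convEnd (antipode R))
    (convEnd_comp_convEnd_of_mul_eq_one antipode_mul_id)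
    (convEnd_comp_convEnd_of_mul_eq_one id_mul_antipode)

lemma galoisEquiv_tmul (a b : H) : galoisEquiv R H (a ⊗ₜ b) = a • comul b := by
  simp [galoisEquiv]

lemma galoisEquiv_mul_one_tmul (t : H ⊗[R] H) (d : H) :
    galoisEquiv R H (t * 1 ⊗ₜ d) = galoisEquiv R H t * comul d := by
  induction t with
  | zero => simp
  | add t u ht hu => simp only [add_mul, map_add, ht, hu]
  | tmul a b => simp [galoisEquiv_tmul, smul_mul_assoc]

variable (R) in
/-- The adjoint action `b ↦ ∑ b₍₁₎ c S(b₍₂₎)` on a fixed element `c`, as the convolution product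
of `b ↦ b c` and the antipode. -/
noncomputable def adConv (c : H) : WithConv (H →ₗ[R] H) :=
  toConv (mulRight R c) * toConv (antipode R)

lemma adConv_mul_id (c : H) : adConv R c * toConv LinearMap.id = toConv (mulRight R c) := by
  rw [adConv, mul_assoc, antipode_mul_id, mul_one]

lemma galoisEquiv_convEnd_adConv_tmul (a b c : H) :
    galoisEquiv R H (convEnd (adConv R c).ofConv (a ⊗ₜ b)) =
      galoisEquiv R H (a ⊗ₜ b) * c ⊗ₜ 1 :=
  calc galoisEquiv R H (convEnd (adConv R c).ofConv (a ⊗ₜ b))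
    _ = convEnd (adConv R c * toConv LinearMap.id).ofConv (a ⊗ₜ b) := by rw [convEnd_mul]; rfl
    _ = a • (comul b * c ⊗ₜ 1) := by rw [adConv_mul_id, convEnd_tmul, rTensor_mulRight_apply]
    _ = galoisEquiv R H (a ⊗ₜ b) * c ⊗ₜ 1 := by rw [galoisEquiv_tmul, smul_mul_assoc]

end Galois

section AdSmash

variable {K : Type*} [Field K] {H : Type*} [Ring H] [HopfAlgebra K H]

lemma adjointAction_tmul (b c : H) : adjointAction K H (b ⊗ₜ c) = adConv K c b := by
  simp [adjointAction, adConv, ← (ℛ K b).eq, sum_tmul, mul_assoc]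

lemma adSmashMul_tmul_tmul (a b c d : H) :
    adSmashMul K H ((a ⊗ₜ b) ⊗ₜ (c ⊗ₜ d)) =
      convEnd (adConv K c).ofConv (a ⊗ₜ b) * 1 ⊗ₜ d := by
  simp [adSmashMul, adjointAction_tmul, ← (ℛ K b).eq, sum_tmul, tmul_sum, Finset.smul_sum,
    Finset.sum_mul, smul_tmul']

theorem galoisEquiv_adSmashMul (x y : H ⊗[K] H) :
    galoisEquiv K H (adSmashMul K H (x ⊗ₜ y)) = galoisEquiv K H x * galoisEquiv K H y := by
  induction x with
  | zero => simp
  | add x x' hx hx' => simp only [add_tmul, map_add, add_mul, hx, hx']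
  | tmul a b =>
    induction y with
    | zero => simp
    | add y y' hy hy' => simp only [tmul_add, map_add, mul_add, hy, hy']
    | tmul c d =>
      rw [adSmashMul_tmul_tmul, galoisEquiv_mul_one_tmul, galoisEquiv_convEnd_adConv_tmul,
        mul_assoc, galoisEquiv_tmul c d, ← smul_one_mul c (comul d)]
      simp [Algebra.TensorProduct.one_def, smul_tmul']

theorem adSmashMul_assoc (x y z : H ⊗[K] H) :
    adSmashMul K H (adSmashMul K H (x ⊗ₜ y) ⊗ₜ z) =
      adSmashMul K H (x ⊗ₜ adSmashMul K H (y ⊗ₜ z)) :=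
  (galoisEquiv K H).injective <| by simp only [galoisEquiv_adSmashMul, mul_assoc]

lemma adSmashMul_tmul_one_tmul (a : H) (y : H ⊗[K] H) :
    adSmashMul K H ((a ⊗ₜ 1) ⊗ₜ y) = a • y :=
  (galoisEquiv K H).injective <| by
    rw [galoisEquiv_adSmashMul, galoisEquiv_tmul, Bialgebra.comul_one, smul_one_mul, map_smul]

lemma counitProj_adSmashMul_tmul_tmul (a b c d : H) :
    counitProj K H H (adSmashMul K H ((a ⊗ₜ b) ⊗ₜ (c ⊗ₜ d))) =
      counit (R := K) d • (a * adConv K c b) ⊗ₜ 1 := by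
  rw [adSmashMul_tmul_tmul, counitProj_mul_one_tmul, counitProj_convEnd_tmul]

theorem counitProj_adSmashMul_counitProj_right (x y : H ⊗[K] H) :
    counitProj K H H (adSmashMul K H (x ⊗ₜ counitProj K H H y)) =
      counitProj K H H (adSmashMul K H (x ⊗ₜ y)) := by
  induction x with
  | zero => simp
  | add x x' hx hx' => simp only [add_tmul, map_add, hx, hx']
  | tmul a b =>
    induction y with
    | zero => simp
    | add y y' hy hy' => simp only [tmul_add, map_add, hy, hy']
    | tmul c d =>
      rw [counitProj_tmul, tmul_smul, map_smul, map_smul_of_tower]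
      simp [counitProj_adSmashMul_tmul_tmul]

theorem counitProj_adSmashMul_counitProj_left (x y : H ⊗[K] H) :
    counitProj K H H (adSmashMul K H (counitProj K H H x ⊗ₜ y)) =
      adSmashMul K H (counitProj K H H x ⊗ₜ counitProj K H H y) := by
  induction x with
  | zero => simp
  | add x x' hx hx' => simp only [add_tmul, map_add, hx, hx']
  | tmul a b =>
    simp only [counitProj_tmul, ← smul_tmul', map_smul, map_smul_of_tower,
      adSmashMul_tmul_one_tmul]

end AdSmash

theorem adjoint_smashProduct_assoc_and_PR_RotaBaxter_general
    (K : Type*) [Field K]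
    (H : Type*) [Ring H] [HopfAlgebra K H] :
    (∀ x y z : H ⊗[K] H,
      adSmashMul K H (adSmashMul K H (x ⊗ₜ[K] y) ⊗ₜ[K] z) =
        adSmashMul K H (x ⊗ₜ[K] adSmashMul K H (y ⊗ₜ[K] z))) ∧
    (let PR : H ⊗[K] H →ₗ[K] H ⊗[K] H :=
      LinearMap.lTensor H
        ((Algebra.linearMap K H) ∘ₗ (Coalgebra.counit (R := K) (A := H)))
    (PR ∘ₗ PR = PR) ∧
    (∀ x y : H ⊗[K] H,
      adSmashMul K H (PR x ⊗ₜ[K] PR y) =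
        PR (adSmashMul K H (x ⊗ₜ[K] PR y)) +
        PR (adSmashMul K H (PR x ⊗ₜ[K] y)) +
        (-1 : K) • PR (adSmashMul K H (x ⊗ₜ[K] y)))) := by
  refine ⟨adSmashMul_assoc, LinearMap.ext counitProj_counitProj, fun x y => ?_⟩
  change adSmashMul K H (counitProj K H H x ⊗ₜ counitProj K H H y) =
    counitProj K H H (adSmashMul K H (x ⊗ₜ counitProj K H H y)) +
    counitProj K H H (adSmashMul K H (counitProj K H H x ⊗ₜ y)) +
    (-1 : K) • counitProj K H H (adSmashMul K H (x ⊗ₜ y))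
  rw [counitProj_adSmashMul_counitProj_right, counitProj_adSmashMul_counitProj_left]
  module

theorem adjoint_smashProduct_assoc_and_PR_RotaBaxter
    (K : Type*) [Field K] [CharZero K]
    (H : Type*) [Ring H] [HopfAlgebra K H] :
    -- associativity of the smash multiplication
    (∀ x y z : H ⊗[K] H,
      adSmashMul K H (adSmashMul K H (x ⊗ₜ[K] y) ⊗ₜ[K] z) =
        adSmashMul K H (x ⊗ₜ[K] adSmashMul K H (y ⊗ₜ[K] z))) ∧
    -- P_R(h # h') = ε(h')(h # 1) is an idempotent Rota-Baxter operator of weight -1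
    (let PR : H ⊗[K] H →ₗ[K] H ⊗[K] H :=
      LinearMap.lTensor H
        ((Algebra.linearMap K H) ∘ₗ (Coalgebra.counit (R := K) (A := H)))
    (PR ∘ₗ PR = PR) ∧
    (∀ x y : H ⊗[K] H,
      adSmashMul K H (PR x ⊗ₜ[K] PR y) =
        PR (adSmashMul K H (x ⊗ₜ[K] PR y)) +
        PR (adSmashMul K H (PR x ⊗ₜ[K] y)) +
        (-1 : K) • PR (adSmashMul K H (x ⊗ₜ[K] y)))) := by
  exact adjoint_smashProduct_assoc_and_PR_RotaBaxter_general K H
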